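/- For every d ≥ 1 there is a constant C = C(d) such that for every n ≥ 1 and every finite set A ⊆ ℤ^d with |A| = n, the sum of |e_x(A) − e_y(A)| over all ordered pairs (x, y) with x, y ∈ A and x ∼ y is at most C n^{1 + 1/d}. -/

import Mathlib

open scoped BigOperators Pointwise symmDiff
open MeasureTheory Filter

noncomputable section
open scoped Classical
namespace RotorRouterPaper

/-- Sites of the lattice `ℤ^d`. -/
abbrev Site (d : ℕ) := Fin d → ℤ

/-- The `i`-th standard basis vector of `ℤ^d`. -/
def unitVec (d : ℕ) (i : Fin d) : Site d := fun j => if j = i then 1 else 0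

/-- Squared Euclidean norm of a lattice point. -/
def nsq {d : ℕ} (x : Site d) : ℝ := ∑ i, ((x i : ℝ)) ^ 2

/-- Euclidean norm of a lattice point. -/
def enorm {d : ℕ} (x : Site d) : ℝ := Real.sqrt (nsq x)

/-- Adjacency `x ∼ y`: Euclidean distance one. -/
def Adj {d : ℕ} (x y : Site d) : Prop := nsq (x - y) = 1

/-- `ω_d`, the Lebesgue volume of the unit ball in `ℝ^d`. -/
def ballVol (d : ℕ) : ℝ := (volume (Metric.ball (0 : EuclideanSpace ℝ (Fin d)) 1)).toReal

/-- The lattice ball `B_n = {y ∈ ℤ^d : ω_d ‖y‖^d < n}`. -/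
def lball (d n : ℕ) : Set (Site d) := {y | ballVol d * enorm y ^ d < (n : ℝ)}

/-- Characterization of the expected exit time function of a (finite) region `A ⊆ ℤ^d`:
it vanishes off `A` and its discrete Laplacian is `-1` on `A`. -/
def IsExitFun (d : ℕ) (A : Set (Site d)) (e : Site d → ℝ) : Prop :=
  (∀ x, x ∉ A → e x = 0) ∧
  ∀ x ∈ A, (1 / (2 * (d : ℝ))) * (∑ i, (e (x + unitVec d i) + e (x - unitVec d i))) - e x = -1

/-- The expected exit time function `x ↦ e_x(A)` (the unique function satisfying
`IsExitFun` when `A` is finite). -/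
def exitFun (d : ℕ) (A : Set (Site d)) : Site d → ℝ :=
  if h : ∃ e, IsExitFun d A e then h.choose else 0

/-- `ē(A) = sup_x e_x(A)`. -/
def ebar (d : ℕ) (A : Set (Site d)) : ℝ := sSup (Set.range (exitFun d A))

/-- `φ(n) = sup {ē(A) - e_o(B_n) : A ⊆ ℤ^d, |A| = n}`. -/
def phi (d n : ℕ) : ℝ :=
  sSup {t | ∃ A : Set (Site d), A.Finite ∧ A.ncard = n ∧ t = ebar d A - exitFun d (lball d n) 0}

/-- `Φ(n) = ∑_{j=1}^n φ(j)`. -/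
def PhiSum (d n : ℕ) : ℝ := ∑ j ∈ Finset.Icc 1 n, phi d j

/-- `ψ(A) = ∑_{x ∈ A} ‖x‖²`. -/
def psi {d : ℕ} (A : Set (Site d)) : ℝ := ∑ᶠ x ∈ A, nsq x

/-- A cardinal direction in `ℤ^d`: one of `±e_1, …, ±e_d`. -/
abbrev Dir (d : ℕ) := Fin d × Bool

/-- The lattice step vector of a cardinal direction. -/
def dirVec (d : ℕ) (ε : Dir d) : Site d := if ε.2 then unitVec d ε.1 else -unitVec d ε.1

/-- A configuration of rotor stacks `r` (with `r x i` the direction used for the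
`(i+1)`-st visit to `x`) has discrepancy at most `D` if for every site, direction and `m ≥ 1`,
among the first `m` rotors of the stack each direction occurs `m/(2d)` times up to error `D`. -/
def HasDiscrepancy (d : ℕ) (D : ℝ) (r : Site d → ℕ → Dir d) : Prop :=
  ∀ (x : Site d) (ε : Dir d) (m : ℕ), 1 ≤ m →
    |(({i | i < m ∧ r x i = ε} : Set ℕ).ncard : ℝ) - (m : ℝ) / (2 * (d : ℝ))| ≤ D

/-- One step of rotor-router walk on a state (current position, visit counts so far):
the particle at `p` being visited for the `(c p + 1)`-st time moves in direction
`r p (c p)` and the visit count at `p` increases by one. -/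
def rstep {d : ℕ} (r : Site d → ℕ → Dir d) (s : Site d × (Site d → ℕ)) :
    Site d × (Site d → ℕ) :=
  (s.1 + dirVec d (r s.1 (s.2 s.1)), Function.update s.2 s.1 (s.2 s.1 + 1))

/-- The state after `t` steps of rotor-router walk started at the origin with visit counts `c`. -/
def walkState {d : ℕ} (r : Site d → ℕ → Dir d) (c : Site d → ℕ) (t : ℕ) :
    Site d × (Site d → ℕ) :=
  (rstep r)^[t] (0, c)

/-- The number of steps until the rotor-router walk started at the origin
(with carried-over visit counts `c`) first leaves the region `A`. -/
def exitSteps {d : ℕ} (r : Site d → ℕ → Dir d) (A : Set (Site d)) (c : Site d → ℕ) : ℕ :=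
  sInf {t | (walkState r c t).1 ∉ A}

/-- The state of rotor-router aggregation after `n` particles have walked and settled:
`(aggState r n).1` is the occupied region `A_{n+1}`, `(aggState r n).2.1` the accumulated
visit counts, and `(aggState r n).2.2` the total number `T_n` of steps taken so far. -/
def aggState {d : ℕ} (r : Site d → ℕ → Dir d) : ℕ → Set (Site d) × (Site d → ℕ) × ℕ
  | 0 => ({0}, fun _ => 0, 0)
  | n + 1 =>
      let s := aggState r n
      let τ := exitSteps r s.1 s.2.1
      (insert (walkState r s.2.1 τ).1 s.1, (walkState r s.2.1 τ).2, s.2.2 + τ)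

/-- The region `A_n` of rotor-router aggregation (for `n ≥ 1`). -/
def aggRegion {d : ℕ} (r : Site d → ℕ → Dir d) (n : ℕ) : Set (Site d) :=
  (aggState r (n - 1)).1

/-- `T_n`, the total number of steps taken by the first `n` particles. -/
def totalSteps {d : ℕ} (r : Site d → ℕ → Dir d) (n : ℕ) : ℕ := (aggState r n).2.2

/-- `A^□ = A + [-1/2,1/2]^d ⊆ ℝ^d`. -/
def box (d : ℕ) (A : Set (Site d)) : Set (EuclideanSpace ℝ (Fin d)) :=
  {z | ∃ x ∈ A, ∀ i, |z i - (x i : ℝ)| ≤ 1 / 2}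

/-- The closed Euclidean ball of unit volume centered at the origin of `ℝ^d`. -/
def unitVolBall (d : ℕ) : Set (EuclideanSpace ℝ (Fin d)) :=
  Metric.closedBall 0 (ballVol d ^ (-(1 : ℝ) / (d : ℝ)))

/-- `A ⊆ ℤ^d` is orthoconvex if every line parallel to a coordinate axis meets `A`
in an interval. -/
def Orthoconvex (d : ℕ) (A : Set (Site d)) : Prop :=
  ∀ x ∈ A, ∀ i : Fin d, ∀ k : ℤ, 0 < k → x + k • unitVec d i ∈ A →
    ∀ j : ℤ, 0 < j → j < k → x + j • unitVec d i ∈ A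

/-- The nonnegative orthant `Q ⊆ ℤ^d`. -/
def orthant (d : ℕ) : Set (Site d) := {x | ∀ i, 0 ≤ x i}

/-- The cube `C(o,r) = {x : ‖x‖_∞ ≤ r}`. -/
def cubeSet (d : ℕ) (r : ℕ) : Set (Site d) := {x | ∀ i, |x i| ≤ (r : ℤ)}

/-- The boundary `∂C(o,r) = {x : ‖x‖_∞ = r + 1 and x ∼ y for some y ∈ C(o,r)}`. -/
def cubeBdry (d : ℕ) (r : ℕ) : Set (Site d) :=
  {x | (∀ i, |x i| ≤ (r : ℤ) + 1) ∧ (∃ i, |x i| = (r : ℤ) + 1) ∧ ∃ y ∈ cubeSet d r, Adj x y}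

/-- Characterization of `h_r(x) = P_x(T_Q > T_{∂C(o,r)})`: it vanishes on
`Q ∩ (C(o,r) ∪ ∂C(o,r))`, equals `1` on `∂C(o,r) ∖ Q`, is discrete harmonic on
`C(o,r) ∖ Q`, and (as a normalization) vanishes off `C(o,r) ∪ ∂C(o,r)`. -/
def IsOrthHarm (d : ℕ) (r : ℕ) (h : Site d → ℝ) : Prop :=
  (∀ x, x ∉ cubeSet d r ∪ cubeBdry d r → h x = 0) ∧
  (∀ x ∈ orthant d ∩ (cubeSet d r ∪ cubeBdry d r), h x = 0) ∧
  (∀ x ∈ cubeBdry d r \ orthant d, h x = 1) ∧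
  (∀ x ∈ cubeSet d r \ orthant d,
    h x = (1 / (2 * (d : ℝ))) * ∑ i, (h (x + unitVec d i) + h (x - unitVec d i)))

/-- The function `h_r` of the previous characterization. -/
def orthHarm (d : ℕ) (r : ℕ) : Site d → ℝ :=
  if h : ∃ f, IsOrthHarm d r f then h.choose else 0

/-- `p(k,r) = sup {h_r(x) : ‖x‖_∞ ≤ k}`. -/
def pkr (d k r : ℕ) : ℝ :=
  sSup {t | ∃ x : Site d, (∀ i, |x i| ≤ (k : ℤ)) ∧ t = orthHarm d r x}

/-- The exponent `γ_d` of Theorem 3.1. -/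
def gam (d : ℕ) : ℝ :=
  if d = 1 then 1 else if d = 2 then 1 / 3
  else (2 : ℝ) ^ (-(d : ℝ)) / (2 * (d : ℝ) ^ 2 * Real.log 3)

/-
Green's identity turns the equation for the exit time `e = e_·(A)` into an identity for its
Dirichlet energy, `D = 2d ∑_A e ≤ 2d √|A| ‖e‖`, so it remains to bound `‖e‖` by `D`. Choose
`r ≍ |A|^(1/d)` with `|A| ≤ r^d`; the cube `[-r, r]^d` then has at least `2|A|` points. Since
`e` is supported on `A`, the correlations `⟪e, e(· + v)⟫` with `v` in this cube add up to at most
`(∑_A |e|)² ≤ |A| ‖e‖²`, so some `v` in the cube satisfies `⟪e, e(· + v)⟫ ≤ ‖e‖² / 2`, that is,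
translation by `v` moves `e` by at least `‖e‖`. But `v` is a sum of at most `r` steps in each
direction, so translation by `v` moves `e` by at most `r √(d D)`. Hence `‖e‖² ≤ d r² D` (a
Faber–Krahn inequality), which gives `D ≤ 4 d³ r² |A|`, and Cauchy–Schwarz over the at most
`2d|A|` ordered edges turns this into the bound on the sum of gradients.
-/

open scoped ENNReal lp InnerProductSpace

section Lp

variable {α : Type*}

lemma exists_lp_coe_eq (p : ℝ≥0∞) {A : Finset α} {e : α → ℝ} (he : ∀ x ∉ A, e x = 0) :
    ∃ f : lp (fun _ : α => ℝ) p, ⇑f = e := by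
  have hfin : {x | e x ≠ 0}.Finite :=
    A.finite_toSet.subset fun x hx => by_contra fun hxA => hx (he x hxA)
  exact ⟨⟨e, (memℓp_zero hfin).of_exponent_ge zero_le⟩, rfl⟩

lemma hasSum_sq_norm_sq (f : ℓ²(α, ℝ)) : HasSum (fun x => f x ^ 2) (‖f‖ ^ 2) := by
  simpa only [real_inner_self_eq_norm_sq, Real.norm_eq_abs, sq_abs] using
    lp.hasSum_inner (𝕜 := ℝ) f f

lemma sq_sum_abs_le_card_mul_norm_sq (A : Finset α) (f : ℓ²(α, ℝ)) :
    (∑ x ∈ A, |f x|) ^ 2 ≤ A.card * ‖f‖ ^ 2 := by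
  calc (∑ x ∈ A, |f x|) ^ 2 ≤ A.card * ∑ x ∈ A, f x ^ 2 := by
        simpa only [sq_abs] using sq_sum_le_card_mul_sum_sq (s := A) (f := fun x => |f x|)
    _ ≤ A.card * ‖f‖ ^ 2 := by
        gcongr
        exact sum_le_hasSum A (fun x _ => sq_nonneg (f x)) (hasSum_sq_norm_sq f)

lemma memℓp_two_comp_injective {β : Type*} {f : α → ℝ} (hf : Memℓp f 2) {g : β → α}
    (hg : g.Injective) : Memℓp (f ∘ g) 2 := by
  have hsum : Summable fun x => ‖f x‖ ^ (2 : ℝ≥0∞).toReal := hf.summable (by norm_num)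
  exact memℓp_gen (hsum.comp_injective hg)

end Lp

section Translation

variable {G : Type*} [AddGroup G]

/-- The right translation `f ↦ f (· + v)` as an isometry of `ℓ²(G)`. -/
def translation (v : G) : ℓ²(G, ℝ) →ₗᵢ[ℝ] ℓ²(G, ℝ) where
  toFun f := ⟨fun x => f (x + v), memℓp_two_comp_injective (lp.memℓp f) (add_left_injective v)⟩
  map_add' _ _ := rfl
  map_smul' _ _ := rfl
  norm_map' f := by
    have hsum : HasSum (fun x => f (x + v) ^ 2) (‖f‖ ^ 2) :=
      ((Equiv.addRight v).hasSum_iff (f := fun x => f x ^ 2)).mpr (hasSum_sq_norm_sq f)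
    exact (sq_eq_sq₀ (norm_nonneg _) (norm_nonneg _)).mp ((hasSum_sq_norm_sq _).unique hsum)

@[simp]
lemma translation_apply (v : G) (f : ℓ²(G, ℝ)) (x : G) : translation v f x = f (x + v) := rfl

@[simp]
lemma translation_zero (f : ℓ²(G, ℝ)) : translation 0 f = f :=
  lp.ext <| funext fun x => congrArg f (add_zero x)

lemma translation_add (v w : G) (f : ℓ²(G, ℝ)) :
    translation (v + w) f = translation v (translation w f) :=
  lp.ext <| funext fun x => congrArg f (add_assoc x v w).symm

/-- The distance in `ℓ²(G)` by which translation by `v` moves `f`, as a seminorm in `v`. -/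
def displacement (f : ℓ²(G, ℝ)) : AddGroupSeminorm G where
  toFun v := ‖translation v f - f‖
  map_zero' := by simp
  add_le' v w := by
    calc ‖translation (v + w) f - f‖
        = ‖translation v (translation w f - f) + (translation v f - f)‖ := by
          rw [map_sub, sub_add_sub_cancel, translation_add]
      _ ≤ ‖translation v f - f‖ + ‖translation w f - f‖ := by
          rw [add_comm ‖translation v f - f‖, ← (translation v).norm_map (translation w f - f)]
          exact norm_add_le _ _
  neg' v := by
    rw [← (translation v).norm_map, map_sub, ← translation_add, add_neg_cancel, translation_zero,
      norm_sub_rev]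

lemma displacement_apply (f : ℓ²(G, ℝ)) (v : G) : displacement f v = ‖translation v f - f‖ := rfl

lemma displacement_sq (f : ℓ²(G, ℝ)) (v : G) :
    displacement f v ^ 2 = 2 * ‖f‖ ^ 2 - 2 * ⟪f, translation v f⟫_ℝ := by
  rw [displacement_apply, norm_sub_sq_real, LinearIsometry.norm_map, real_inner_comm]
  ring

lemma hasSum_displacement_sq (f : ℓ²(G, ℝ)) (v : G) :
    HasSum (fun x => f x * (2 * f x - f (x + v) - f (x - v))) (displacement f v ^ 2) := by
  have hinner : ⟪f, translation (-v) f⟫_ℝ = ⟪f, translation v f⟫_ℝ := by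
    rw [← (translation v).inner_map_map, ← translation_add, add_neg_cancel, translation_zero,
      real_inner_comm]
  have hsq : displacement f v ^ 2
      = ⟪f, (2 : ℝ) • f - translation v f - translation (-v) f⟫_ℝ := by
    rw [displacement_sq, inner_sub_right, inner_sub_right, hinner, real_inner_smul_right,
      real_inner_self_eq_norm_sq]
    ring
  have hterm (x : G) : ⟪f x, ((2 : ℝ) • f - translation v f - translation (-v) f) x⟫_ℝ
      = f x * (2 * f x - f (x + v) - f (x - v)) := by
    rw [RCLike.inner_apply, conj_trivial, mul_comm, sub_eq_add_neg x]
    rfl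
  simpa only [hsq, hterm] using
    lp.hasSum_inner (𝕜 := ℝ) f ((2 : ℝ) • f - translation v f - translation (-v) f)

lemma sum_inner_translation_le {A : Finset G} {f : ℓ²(G, ℝ)} (hf : ∀ x ∉ A, f x = 0)
    (K : Finset G) : ∑ v ∈ K, ⟪f, translation v f⟫_ℝ ≤ A.card * ‖f‖ ^ 2 := by
  have hinner (v : G) : ⟪f, translation v f⟫_ℝ = ∑ x ∈ A, f x * f (x + v) := by
    refine (lp.hasSum_inner (𝕜 := ℝ) f (translation v f)).unique ?_
    simp only [RCLike.inner_apply, conj_trivial, translation_apply, mul_comm (f (_ + v))]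
    exact hasSum_sum_of_ne_finset_zero fun x hx => by rw [hf x hx, zero_mul]
  have htranslate (x : G) : ∑ v ∈ K, |f (x + v)| ≤ ∑ y ∈ A, |f y| := by
    have habs : HasSum (fun y => |f y|) (∑ y ∈ A, |f y|) :=
      hasSum_sum_of_ne_finset_zero fun y hy => by rw [hf y hy, abs_zero]
    rw [← Finset.sum_image (g := (x + ·)) (f := fun y => |f y|) (add_right_injective x).injOn]
    exact sum_le_hasSum _ (fun y _ => abs_nonneg (f y)) habs
  calc ∑ v ∈ K, ⟪f, translation v f⟫_ℝ
      = ∑ x ∈ A, f x * ∑ v ∈ K, f (x + v) := by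
        simp only [hinner, Finset.mul_sum]
        exact Finset.sum_comm
    _ ≤ ∑ x ∈ A, |f x| * ∑ y ∈ A, |f y| := by
        refine Finset.sum_le_sum fun x _ => (le_abs_self _).trans ?_
        rw [abs_mul]
        gcongr
        exact (Finset.abs_sum_le_sum_abs _ _).trans (htranslate x)
    _ = (∑ x ∈ A, |f x|) ^ 2 := by rw [← Finset.sum_mul, sq]
    _ ≤ A.card * ‖f‖ ^ 2 := sq_sum_abs_le_card_mul_norm_sq A f

lemma exists_norm_le_displacement {A K : Finset G} {f : ℓ²(G, ℝ)} (hf : ∀ x ∉ A, f x = 0)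
    (hK : K.Nonempty) (hAK : 2 * A.card ≤ K.card) : ∃ v ∈ K, ‖f‖ ≤ displacement f v := by
  have hsum : ∑ _v ∈ K, ‖f‖ ^ 2 ≤ ∑ v ∈ K, displacement f v ^ 2 := by
    have hcard : 2 * (A.card : ℝ) ≤ K.card := by exact_mod_cast hAK
    simp only [displacement_sq, Finset.sum_sub_distrib, ← Finset.mul_sum, Finset.sum_const,
      nsmul_eq_mul]
    linarith [sum_inner_translation_le hf K, mul_le_mul_of_nonneg_right hcard (sq_nonneg ‖f‖)]
  obtain ⟨v, hv, hle⟩ := Finset.exists_le_of_sum_le hK hsum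
  exact ⟨v, hv, le_of_sq_le_sq hle (apply_nonneg _ _)⟩

end Translation

section Seminorm

lemma map_zsmul_le_abs_mul {G : Type*} [AddCommGroup G] (p : AddGroupSeminorm G) (k : ℤ) (x : G) :
    p (k • x) ≤ |(k : ℝ)| * p x :=
  letI := p.toSeminormedAddCommGroup
  norm_zsmul_le k x

lemma map_pi_int_le_mul_sum {ι : Type*} [Fintype ι] [DecidableEq ι] (p : AddGroupSeminorm (ι → ℤ))
    {v : ι → ℤ} {r : ℕ} (hv : ∀ i, |v i| ≤ r) : p v ≤ r * ∑ i, p (Pi.single i 1) := by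
  calc p v = p (∑ i, v i • Pi.single i 1) := by
        simp only [← Pi.single_smul, smul_eq_mul, mul_one, Finset.univ_sum_single]
    _ ≤ ∑ i, p (v i • Pi.single i 1) :=
        Finset.le_sum_of_subadditive p (map_zero p).le (map_add_le_add p) _ _
    _ ≤ ∑ i, r * p (Pi.single i 1) := by
        refine Finset.sum_le_sum fun i _ => (map_zsmul_le_abs_mul p _ _).trans ?_
        gcongr
        exact_mod_cast hv i
    _ = r * ∑ i, p (Pi.single i 1) := (Finset.mul_sum ..).symm

end Seminorm

section Lattice

variable {d : ℕ}

lemma unitVec_eq_single (i : Fin d) : unitVec d i = Pi.single i 1 :=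
  funext fun j => (Pi.single_apply i (1 : ℤ) j).symm

/-- The Dirichlet energy of `f`: the sum of `|f x - f y|²` over the unordered pairs of adjacent
sites. -/
def dirichletEnergy (f : ℓ²(Site d, ℝ)) : ℝ := ∑ i, displacement f (unitVec d i) ^ 2

lemma dirichletEnergy_nonneg (f : ℓ²(Site d, ℝ)) : 0 ≤ dirichletEnergy f :=
  Finset.sum_nonneg fun _ _ => sq_nonneg _

lemma displacement_sq_le_of_abs_le (f : ℓ²(Site d, ℝ)) {v : Site d} {r : ℕ} (hv : ∀ i, |v i| ≤ r) :
    displacement f v ^ 2 ≤ r ^ 2 * d * dirichletEnergy f := by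
  calc displacement f v ^ 2 ≤ (r * ∑ i, displacement f (unitVec d i)) ^ 2 := by
        simp only [unitVec_eq_single]
        gcongr
        exact map_pi_int_le_mul_sum _ hv
    _ = r ^ 2 * (∑ i, displacement f (unitVec d i)) ^ 2 := mul_pow _ _ _
    _ ≤ r ^ 2 * (d * dirichletEnergy f) := by
        gcongr
        simpa [dirichletEnergy] using sq_sum_le_card_mul_sum_sq (s := Finset.univ)
          (f := fun i => displacement f (unitVec d i))
    _ = r ^ 2 * d * dirichletEnergy f := (mul_assoc _ _ _).symm

theorem norm_sq_le_mul_dirichletEnergy (hd : d ≠ 0) {A : Finset (Site d)} {f : ℓ²(Site d, ℝ)}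
    (hf : ∀ x ∉ A, f x = 0) {r : ℕ} (hr : A.card ≤ r ^ d) :
    ‖f‖ ^ 2 ≤ r ^ 2 * d * dirichletEnergy f := by
  have hcube : 2 * A.card ≤ (Fintype.piFinset fun _ : Fin d => Finset.Icc (-r : ℤ) r).card := by
    rw [Fintype.card_piFinset_const, Int.card_Icc]
    calc 2 * A.card ≤ 2 ^ d * r ^ d := Nat.mul_le_mul (Nat.le_self_pow hd 2) hr
      _ = (2 * r) ^ d := (mul_pow 2 r d).symm
      _ ≤ _ := Nat.pow_le_pow_left (by lia) d
  obtain ⟨v, hv, hle⟩ := exists_norm_le_displacement hf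
    (Fintype.piFinset_nonempty.mpr fun _ => Finset.nonempty_Icc.mpr (by lia)) hcube
  have hvr (i : Fin d) : |v i| ≤ r :=
    abs_le.mpr (Finset.mem_Icc.mp (Fintype.mem_piFinset.mp hv i))
  calc ‖f‖ ^ 2 ≤ displacement f v ^ 2 := by gcongr
    _ ≤ r ^ 2 * d * dirichletEnergy f := displacement_sq_le_of_abs_le f hvr

/-- The generator of simple random walk on `ℤ^d`, normalized as in `IsExitFun`. -/
def laplacian (d : ℕ) : (Site d → ℝ) →ₗ[ℝ] Site d → ℝ where
  toFun f x := (1 / (2 * (d : ℝ))) * (∑ i, (f (x + unitVec d i) + f (x - unitVec d i))) - f x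
  map_add' f g := by
    funext x
    simp only [Pi.add_apply, Finset.sum_add_distrib]
    ring
  map_smul' c f := by
    funext x
    simp only [Pi.smul_apply, smul_eq_mul, RingHom.id_apply, ← mul_add, ← Finset.mul_sum]
    ring

lemma isExitFun_iff {A : Set (Site d)} {e : Site d → ℝ} :
    IsExitFun d A e ↔ (∀ x ∉ A, e x = 0) ∧ ∀ x ∈ A, laplacian d e x = -1 :=
  Iff.rfl

lemma neg_two_mul_laplacian (f : Site d → ℝ) (x : Site d) :
    -(2 * d) * laplacian d f x
      = ∑ i, (2 * f x - f (x + unitVec d i) - f (x - unitVec d i)) := by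
  rcases eq_or_ne d 0 with rfl | hd
  · simp
  · simp only [laplacian, LinearMap.coe_mk, AddHom.coe_mk, sub_sub, Finset.sum_sub_distrib,
      Finset.sum_const, Finset.card_univ, Fintype.card_fin, nsmul_eq_mul]
    field_simp
    ring

theorem dirichletEnergy_eq_sum_mul_laplacian {A : Finset (Site d)} {f : ℓ²(Site d, ℝ)}
    (hf : ∀ x ∉ A, f x = 0) :
    dirichletEnergy f = -(2 * d) * ∑ x ∈ A, f x * laplacian d f x := by
  have hsum := hasSum_sum fun i (_ : i ∈ Finset.univ) => hasSum_displacement_sq f (unitVec d i)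
  rw [dirichletEnergy, hsum.unique <| hasSum_sum_of_ne_finset_zero (s := A) fun x hx => by
    simp [hf x hx], Finset.mul_sum]
  refine Finset.sum_congr rfl fun x _ => ?_
  rw [← Finset.mul_sum, ← neg_two_mul_laplacian]
  ring

lemma eq_zero_of_laplacian_eq_zero (hd : d ≠ 0) {A : Finset (Site d)} {e : Site d → ℝ}
    (he : ∀ x ∉ A, e x = 0) (hlap : ∀ x ∈ A, laplacian d e x = 0) : e = 0 := by
  obtain ⟨f, rfl⟩ := exists_lp_coe_eq 2 he
  have henergy : dirichletEnergy f = 0 := by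
    rw [dirichletEnergy_eq_sum_mul_laplacian he,
      Finset.sum_eq_zero fun x hx => by rw [hlap x hx, mul_zero], mul_zero]
  have hnorm := norm_sq_le_mul_dirichletEnergy hd he (Nat.le_self_pow hd A.card)
  rw [henergy, mul_zero, sq_nonpos_iff, norm_eq_zero] at hnorm
  rw [hnorm, lp.coeFn_zero]

theorem exists_isExitFun (hd : d ≠ 0) (A : Finset (Site d)) : ∃ e, IsExitFun d A e := by
  let extend := Function.ExtendByZero.linearMap ℝ ((↑) : A → Site d)
  let T : (A → ℝ) →ₗ[ℝ] A → ℝ := LinearMap.funLeft ℝ ℝ (↑) ∘ₗ laplacian d ∘ₗ extend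
  have hextend (u : A → ℝ) : ∀ x ∉ A, extend u x = 0 := fun x hx =>
    Function.extend_apply' _ _ _ fun ⟨a, ha⟩ => hx (ha ▸ a.2)
  have hinj : Function.Injective T := by
    refine (injective_iff_map_eq_zero T).mpr fun u hu => funext fun a => ?_
    have hzero := eq_zero_of_laplacian_eq_zero hd (hextend u) fun x hx => congrFun hu ⟨x, hx⟩
    calc u a = extend u a := (Subtype.val_injective.extend_apply u 0 a).symm
      _ = 0 := congrFun hzero a
  obtain ⟨u, hu⟩ := LinearMap.injective_iff_surjective.mp hinj (fun _ => -1)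
  exact ⟨extend u, isExitFun_iff.mpr ⟨hextend u, fun x hx => congrFun hu ⟨x, hx⟩⟩⟩

theorem isExitFun_exitFun (hd : d ≠ 0) (A : Finset (Site d)) :
    IsExitFun d A (exitFun d A) := by
  rw [exitFun, dif_pos (exists_isExitFun hd A)]
  exact (exists_isExitFun hd A).choose_spec

theorem dirichletEnergy_le_of_isExitFun (hd : d ≠ 0) {A : Finset (Site d)} {f : ℓ²(Site d, ℝ)}
    (hf : IsExitFun d A f) {r : ℕ} (hr : A.card ≤ r ^ d) :
    dirichletEnergy f ≤ 4 * d ^ 3 * r ^ 2 * A.card := by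
  obtain ⟨hsupp, hlap⟩ := isExitFun_iff.mp hf
  have henergy : dirichletEnergy f = 2 * d * ∑ x ∈ A, f x := by
    rw [dirichletEnergy_eq_sum_mul_laplacian hsupp,
      Finset.sum_congr rfl fun x hx => by rw [hlap x hx]]
    simp
  have hsum : (∑ x ∈ A, f x) ^ 2 ≤ A.card * (r ^ 2 * d * dirichletEnergy f) := by
    calc (∑ x ∈ A, f x) ^ 2 ≤ (∑ x ∈ A, |f x|) ^ 2 :=
          sq_le_sq' (by linarith [neg_abs_le (∑ x ∈ A, f x), A.abs_sum_le_sum_abs f])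
            (Finset.sum_le_sum fun x _ => le_abs_self _)
      _ ≤ A.card * ‖f‖ ^ 2 := sq_sum_abs_le_card_mul_norm_sq A f
      _ ≤ A.card * (r ^ 2 * d * dirichletEnergy f) := by
          gcongr
          exact norm_sq_le_mul_dirichletEnergy hd hsupp hr
  have hsq : dirichletEnergy f * dirichletEnergy f
      ≤ 4 * d ^ 3 * r ^ 2 * A.card * dirichletEnergy f := by
    calc dirichletEnergy f * dirichletEnergy f = 4 * d ^ 2 * (∑ x ∈ A, f x) ^ 2 := by
          rw [henergy]
          ring
      _ ≤ 4 * d ^ 2 * (A.card * (r ^ 2 * d * dirichletEnergy f)) := by gcongr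
      _ = 4 * d ^ 3 * r ^ 2 * A.card * dirichletEnergy f := by ring
  rcases (dirichletEnergy_nonneg f).eq_or_lt with hzero | hpos
  · rw [← hzero]
    positivity
  · exact le_of_mul_le_mul_right hsq hpos

lemma exists_eq_single_of_sum_sq_eq_one {ι : Type*} [Fintype ι] [DecidableEq ι] {z : ι → ℤ}
    (hz : ∑ i, z i ^ 2 = 1) : ∃ i, z = Pi.single i 1 ∨ z = -Pi.single i 1 := by
  obtain ⟨i, -, hi⟩ : ∃ i ∈ Finset.univ, z i ^ 2 ≠ 0 :=
    Finset.exists_ne_zero_of_sum_ne_zero (hz ▸ one_ne_zero)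
  have hi_pos : 0 < z i ^ 2 := (sq_nonneg (z i)).lt_of_ne' hi
  have hi_one : z i ^ 2 = 1 :=
    le_antisymm (hz ▸ Finset.single_le_sum (fun j _ => sq_nonneg (z j)) (Finset.mem_univ i)) hi_pos
  have hzero (j : ι) (hj : j ≠ i) : z j = 0 := by
    have hadd := Finset.add_le_sum (fun j _ => sq_nonneg (z j)) (Finset.mem_univ i)
      (Finset.mem_univ j) hj.symm
    exact pow_eq_zero_iff two_ne_zero |>.mp (by nlinarith [sq_nonneg (z j)])
  have hz_single : z = Pi.single i (z i) := by
    funext j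
    rcases eq_or_ne j i with rfl | hj
    · rw [Pi.single_eq_same]
    · rw [Pi.single_eq_of_ne hj, hzero j hj]
  rw [hz_single]
  rcases sq_eq_sq_iff_eq_or_eq_neg.mp (hi_one.trans (one_pow 2).symm) with h | h
  · exact ⟨i, .inl (by rw [h])⟩
  · exact ⟨i, .inr (by rw [h, Pi.single_neg])⟩

lemma exists_eq_add_dirVec {x y : Site d} (hxy : Adj x y) : ∃ ε : Dir d, y = x + dirVec d ε := by
  have hsum : ∑ i, (x - y) i ^ 2 = 1 := by
    have hreal : nsq (x - y) = 1 := hxy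
    rw [nsq] at hreal
    exact_mod_cast hreal
  obtain ⟨i, hi | hi⟩ := exists_eq_single_of_sum_sq_eq_one hsum
  · exact ⟨(i, false), by simp [dirVec, unitVec_eq_single, ← hi]⟩
  · exact ⟨(i, true), by simp [dirVec, unitVec_eq_single, ← neg_eq_iff_eq_neg.mpr hi]⟩

/-- The edges of the graph induced by `ℤ^d` on `A`, each counted once in either orientation. -/
def adjPairs (A : Set (Site d)) : Set (Site d × Site d) := {p | p.1 ∈ A ∧ p.2 ∈ A ∧ Adj p.1 p.2}

lemma finsum_adjPairs_le_sum_dirVec (A : Finset (Site d)) {g : Site d × Site d → ℝ} (hg : 0 ≤ g) :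
    ∑ᶠ p ∈ adjPairs (A : Set (Site d)), g p ≤ ∑ ε, ∑ x ∈ A, g (x, x + dirVec d ε) := by
  set steps := (Finset.univ ×ˢ A).image fun q : Dir d × Site d => (q.2, q.2 + dirVec d q.1)
  have hsub : adjPairs (A : Set (Site d)) ⊆ steps := by
    rintro ⟨x, y⟩ ⟨hx, -, hxy⟩
    obtain ⟨ε, rfl⟩ : ∃ ε, y = x + dirVec d ε := exists_eq_add_dirVec hxy
    exact Finset.mem_coe.mpr <| Finset.mem_image.mpr
      ⟨(ε, x), Finset.mk_mem_product (Finset.mem_univ ε) (Finset.mem_coe.mp hx), rfl⟩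
  have hfin : (adjPairs (A : Set (Site d))).Finite := steps.finite_toSet.subset hsub
  calc ∑ᶠ p ∈ adjPairs (A : Set (Site d)), g p = ∑ p ∈ hfin.toFinset, g p :=
        finsum_mem_eq_finite_toFinset_sum g hfin
    _ ≤ ∑ p ∈ steps, g p :=
        Finset.sum_le_sum_of_subset_of_nonneg (hfin.toFinset_subset.mpr hsub) fun p _ _ => hg p
    _ ≤ ∑ q ∈ Finset.univ ×ˢ A, g (q.2, q.2 + dirVec d q.1) :=
        Finset.sum_image_le_of_nonneg fun q _ => hg _
    _ = ∑ ε, ∑ x ∈ A, g (x, x + dirVec d ε) := Finset.sum_product _ _ _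

lemma displacement_dirVec (f : ℓ²(Site d, ℝ)) (ε : Dir d) :
    displacement f (dirVec d ε) = displacement f (unitVec d ε.1) := by
  unfold dirVec
  split_ifs
  · rfl
  · exact map_neg_eq_map _ _

theorem sq_finsum_adjPairs_abs_sub_le (f : ℓ²(Site d, ℝ)) (A : Finset (Site d)) :
    (∑ᶠ p ∈ adjPairs (A : Set (Site d)), |f p.1 - f p.2|) ^ 2
      ≤ 4 * d * A.card * dirichletEnergy f := by
  have hsteps := finsum_adjPairs_le_sum_dirVec A (g := fun p => |f p.1 - f p.2|)
    fun _ => abs_nonneg _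
  have hstep (ε : Dir d) : (∑ x ∈ A, |f x - f (x + dirVec d ε)|) ^ 2
      ≤ A.card * displacement f (unitVec d ε.1) ^ 2 := by
    rw [← displacement_dirVec]
    simpa [abs_sub_comm, displacement_apply] using
      sq_sum_abs_le_card_mul_norm_sq A (translation (dirVec d ε) f - f)
  calc _ ≤ (∑ ε, ∑ x ∈ A, |f x - f (x + dirVec d ε)|) ^ 2 := by
        gcongr
        exact finsum_nonneg fun p => finsum_nonneg fun _ => abs_nonneg _
    _ ≤ (Finset.univ : Finset (Dir d)).card * ∑ ε, (∑ x ∈ A, |f x - f (x + dirVec d ε)|) ^ 2 :=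
        sq_sum_le_card_mul_sum_sq
    _ ≤ (Finset.univ : Finset (Dir d)).card *
          ∑ ε : Dir d, A.card * displacement f (unitVec d ε.1) ^ 2 := by
        gcongr with ε
        exact hstep ε
    _ = 4 * d * A.card * dirichletEnergy f := by
        simp only [Finset.card_univ, Fintype.card_prod, Fintype.card_fin, Fintype.card_bool,
          Fintype.sum_prod_type, Finset.sum_const, ← Finset.mul_sum,
          dirichletEnergy, nsmul_eq_mul]
        push_cast
        ring

end Lattice

lemma exists_le_pow_and_le_two_mul_rpow {d n : ℕ} (hd : d ≠ 0) (hn : 1 ≤ n) :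
    ∃ r : ℕ, n ≤ r ^ d ∧ (r : ℝ) ≤ 2 * (n : ℝ) ^ (1 / (d : ℝ)) := by
  have hroot : 1 ≤ (n : ℝ) ^ (1 / (d : ℝ)) :=
    Real.one_le_rpow (by exact_mod_cast hn) (by positivity)
  have hpow : (n : ℝ) ≤ (⌈(n : ℝ) ^ (1 / (d : ℝ))⌉₊ : ℝ) ^ d := by
    calc (n : ℝ) = ((n : ℝ) ^ (1 / (d : ℝ))) ^ d := by
          rw [one_div, Real.rpow_inv_natCast_pow n.cast_nonneg hd]
      _ ≤ (⌈(n : ℝ) ^ (1 / (d : ℝ))⌉₊ : ℝ) ^ d := by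
          gcongr
          exact Nat.le_ceil _
  refine ⟨⌈(n : ℝ) ^ (1 / (d : ℝ))⌉₊, by exact_mod_cast hpow, ?_⟩
  linarith [Nat.ceil_lt_add_one (zero_le_one.trans hroot)]

theorem lemma_cauchyschwarz (d : ℕ) (hd : 1 ≤ d) :
    ∃ C : ℝ, ∀ n : ℕ, 1 ≤ n → ∀ A : Set (Site d), A.Finite → A.ncard = n →
      (∑ᶠ p ∈ {p : Site d × Site d | p.1 ∈ A ∧ p.2 ∈ A ∧ Adj p.1 p.2},
        |exitFun d A p.1 - exitFun d A p.2|) ≤ C * (n : ℝ) ^ (1 + 1 / (d : ℝ)) := by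
  refine ⟨8 * d ^ 2, fun n hn A hA hcard => ?_⟩
  lift A to Finset (Site d) using hA
  rw [Set.ncard_coe_finset] at hcard
  have hd₀ : d ≠ 0 := Nat.one_le_iff_ne_zero.mp hd
  obtain ⟨r, hnr, hr⟩ := exists_le_pow_and_le_two_mul_rpow hd₀ hn
  have hexit := isExitFun_exitFun hd₀ A
  obtain ⟨f, hf⟩ := exists_lp_coe_eq 2 (isExitFun_iff.mp hexit).1
  rw [← hf] at hexit ⊢
  have henergy := dirichletEnergy_le_of_isExitFun hd₀ hexit (hcard.trans_le hnr)
  have hedges := sq_finsum_adjPairs_abs_sub_le f A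
  rw [hcard] at henergy hedges
  refine le_of_sq_le_sq (hedges.trans ?_) (by positivity)
  calc 4 * d * n * dirichletEnergy f ≤ 4 * d * n * (4 * d ^ 3 * r ^ 2 * n) := by gcongr
    _ ≤ 4 * d * n * (4 * d ^ 3 * (2 * (n : ℝ) ^ (1 / (d : ℝ))) ^ 2 * n) := by gcongr
    _ = (8 * d ^ 2 * (n : ℝ) ^ (1 + 1 / (d : ℝ))) ^ 2 := by
        rw [Real.rpow_add (by positivity), Real.rpow_one]
        ring

end RotorRouterPaper
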